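/- Let T ⊂ ℝ⁴ be the three-point set {(cos(π/3), sin(π/3), 0, 0), (−1, 0, 0, 0), (cos(π/3), −sin(π/3), 0, 0)} (a regular triangle in the plane spanned by the first two coordinates) and let H ⊂ ℝ⁴ be the six-point set {(0, 0, cos(kπ/3), sin(kπ/3)) : k = 0, 1, 2, 3, 4, 5} (a regular hexagon in the plane spanned by the last two coordinates). Then the subgroup of the orthogonal group O(4, ℝ) consisting of those orthogonal transformations A with A(T) = T and A(H) = H is isomorphic, as a group, to the direct product D₃ × D₆ of the dihedral group of order 6 and the dihedral group of order 12; in particular it has order 72. -/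

import Mathlib

open Real

/-- The regular triangle in the plane spanned by the first two coordinates: the images of
the three twistor lines of the Fermat cubic. -/
noncomputable def twistorTriangle : Set (Fin 4 → ℝ) :=
  {![Real.cos (π / 3), Real.sin (π / 3), 0, 0], ![-1, 0, 0, 0],
    ![Real.cos (π / 3), -Real.sin (π / 3), 0, 0]}

/-- The regular hexagon in the plane spanned by the last two coordinates: the six triple
points of the Fermat cubic. -/
noncomputable def tripleHexagon : Set (Fin 4 → ℝ) :=
  {v | ∃ k : Fin 6, v = ![0, 0, Real.cos ((k : ℕ) * π / 3), Real.sin ((k : ℕ) * π / 3)]}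

/-!
A regular triangle spans its plane, so an orthogonal matrix preserving it maps that plane into
itself, hence by orthogonality also the complementary plane: it is block diagonal, and the group is
the product of the symmetry groups of the two polygons. In the plane `ℂ = ℝ²` an orthogonal matrix
is a rotation or a reflection, and within each of the two kinds it is determined by the image of a
single vertex, so a regular `n`-gon has no symmetries besides those of the dihedral group.
-/

open Matrix

namespace PolygonSymmetry

section SplitVectors

variable {ι κ μ R : Type*} [Zero R]

/-- The inclusion of the first summand of `R^μ = R^ι ⊕ R^κ`, for a splitting `e` of the index
type. -/
def inlVec (e : ι ⊕ κ ≃ μ) (x : ι → R) : μ → R := Sum.elim x 0 ∘ e.symm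

/-- The inclusion of the second summand of `R^μ = R^ι ⊕ R^κ`, for a splitting `e` of the index
type. -/
def inrVec (e : ι ⊕ κ ≃ μ) (y : κ → R) : μ → R := Sum.elim 0 y ∘ e.symm

theorem inlVec_injective (e : ι ⊕ κ ≃ μ) : Function.Injective (inlVec (R := R) e) := fun x x' h =>
  funext fun i => by simpa [inlVec] using congrFun h (e (Sum.inl i))

theorem inrVec_injective (e : ι ⊕ κ ≃ μ) : Function.Injective (inrVec (R := R) e) := fun y y' h =>
  funext fun i => by simpa [inrVec] using congrFun h (e (Sum.inr i))

end SplitVectors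

section SetStabilizer

theorem eq_zero_of_mulVec_eq_zero_of_span_eq_top {ι κ R : Type*} [Fintype ι] [CommRing R]
    {S : Set (ι → R)} (hS : Submodule.span R S = ⊤) {B : Matrix κ ι R}
    (hB : ∀ x ∈ S, B *ᵥ x = 0) : B = 0 := by
  classical exact Matrix.toLin'.injective (LinearMap.ext_on hS fun x hx => by simp [hB x hx])

variable {ι κ μ R : Type*} [Fintype ι] [DecidableEq ι] [Fintype κ] [DecidableEq κ] [Fintype μ]
  [DecidableEq μ] [CommRing R]

/-- The group of orthogonal symmetries of a set of vectors: the orthogonal matrices mapping the set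
onto itself. -/
def orthogonalStabilizer (S : Set (ι → R)) : Subgroup (orthogonalGroup ι R) where
  carrier := {A | (fun v => (A : Matrix ι ι R) *ᵥ v) '' S = S}
  one_mem' := by simp
  mul_mem' {A B} hA hB := by
    calc (fun v => (A * B : Matrix ι ι R) *ᵥ v) '' S
        = (fun v => (A : Matrix ι ι R) *ᵥ v) '' ((fun v => (B : Matrix ι ι R) *ᵥ v) '' S) := by
          simp only [Set.image_image, mulVec_mulVec]
      _ = S := by rw [hB, hA]
  inv_mem' {A} hA := by
    calc (fun v => (A⁻¹ : orthogonalGroup ι R).1 *ᵥ v) '' S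
        = (fun v => (A⁻¹ : orthogonalGroup ι R).1 *ᵥ v) ''
            ((fun v => (A : Matrix ι ι R) *ᵥ v) '' S) := by rw [hA]
      _ = S := by
        simp only [Set.image_image, mulVec_mulVec, ← UnitaryGroup.mul_val, inv_mul_cancel,
          UnitaryGroup.one_val, one_mulVec, Set.image_id']

theorem mem_orthogonalStabilizer {S : Set (ι → R)} {A : orthogonalGroup ι R} :
    A ∈ orthogonalStabilizer S ↔ (fun v => (A : Matrix ι ι R) *ᵥ v) '' S = S :=
  Iff.rfl

theorem fromBlocks_mem_orthogonalGroup {A : Matrix ι ι R} {D : Matrix κ κ R}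
    (hA : A ∈ orthogonalGroup ι R) (hD : D ∈ orthogonalGroup κ R) :
    fromBlocks A 0 0 D ∈ orthogonalGroup (ι ⊕ κ) R := by
  rw [mem_orthogonalGroup_iff] at *
  simp [fromBlocks_transpose, fromBlocks_multiply, hA, hD]

theorem blocks_of_fromBlocks_zero₂₁_mem_orthogonalGroup {A : Matrix ι ι R} {B : Matrix ι κ R}
    {D : Matrix κ κ R} (h : fromBlocks A B 0 D ∈ orthogonalGroup (ι ⊕ κ) R) :
    A ∈ orthogonalGroup ι R ∧ B = 0 ∧ D ∈ orthogonalGroup κ R := by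
  rw [mem_orthogonalGroup_iff, fromBlocks_transpose, fromBlocks_multiply, ← fromBlocks_one,
    fromBlocks_inj] at h
  simp only [transpose_zero, Matrix.mul_zero, Matrix.zero_mul, zero_add] at h
  obtain ⟨hAB, hBD, -, hD⟩ := h
  have hB : B = 0 := by
    calc B = B * Dᵀ * D := by rw [Matrix.mul_assoc, mul_eq_one_comm.mp hD, Matrix.mul_one]
      _ = 0 := by rw [hBD, Matrix.zero_mul]
  subst hB
  rw [mem_orthogonalGroup_iff, mem_orthogonalGroup_iff]
  exact ⟨by simpa using hAB, rfl, hD⟩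

theorem submatrix_equiv_mem_orthogonalGroup {M : Matrix ι ι R} (e : κ ≃ ι)
    (hM : M ∈ orthogonalGroup ι R) : M.submatrix e e ∈ orthogonalGroup κ R := by
  rw [mem_orthogonalGroup_iff] at *
  rw [transpose_submatrix, submatrix_mul_equiv, hM, submatrix_one_equiv]

/-- The block diagonal embedding `O(ι) × O(κ) → O(μ)`, for a splitting `e` of the index type. -/
def blockDiagonalHom (R : Type*) [CommRing R] (e : ι ⊕ κ ≃ μ) :
    orthogonalGroup ι R × orthogonalGroup κ R →* orthogonalGroup μ R where
  toFun A := ⟨(fromBlocks A.1.1 0 0 A.2.1).submatrix e.symm e.symm,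
    submatrix_equiv_mem_orthogonalGroup e.symm (fromBlocks_mem_orthogonalGroup A.1.2 A.2.2)⟩
  map_one' := Subtype.ext (by simp)
  map_mul' A B := Subtype.ext (by simp [fromBlocks_multiply])

theorem coe_blockDiagonalHom (e : ι ⊕ κ ≃ μ) (A : orthogonalGroup ι R × orthogonalGroup κ R) :
    (blockDiagonalHom R e A : Matrix μ μ R) =
      (fromBlocks A.1.1 0 0 A.2.1).submatrix e.symm e.symm :=
  rfl

theorem blockDiagonalHom_injective (e : ι ⊕ κ ≃ μ) :
    Function.Injective (blockDiagonalHom R e) := fun A B h => by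
  have h : fromBlocks A.1.1 0 0 A.2.1 = fromBlocks B.1.1 0 0 B.2.1 :=
    (reindex e e).injective (congrArg Subtype.val h)
  obtain ⟨h₁, -, -, h₂⟩ := fromBlocks_inj.mp h
  exact Prod.ext (Subtype.ext h₁) (Subtype.ext h₂)

theorem blockDiagonalHom_mulVec_inlVec (e : ι ⊕ κ ≃ μ)
    (A : orthogonalGroup ι R × orthogonalGroup κ R) (x : ι → R) :
    (blockDiagonalHom R e A : Matrix μ μ R) *ᵥ inlVec e x = inlVec e (A.1.1 *ᵥ x) := by
  simp [coe_blockDiagonalHom, inlVec, submatrix_mulVec_equiv, Function.comp_assoc,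
    fromBlocks_mulVec]

theorem blockDiagonalHom_mulVec_inrVec (e : ι ⊕ κ ≃ μ)
    (A : orthogonalGroup ι R × orthogonalGroup κ R) (y : κ → R) :
    (blockDiagonalHom R e A : Matrix μ μ R) *ᵥ inrVec e y = inrVec e (A.2.1 *ᵥ y) := by
  simp [coe_blockDiagonalHom, inrVec, submatrix_mulVec_equiv, Function.comp_assoc,
    fromBlocks_mulVec]

theorem comap_blockDiagonalHom_orthogonalStabilizer (e : ι ⊕ κ ≃ μ) (S : Set (ι → R))
    (T : Set (κ → R)) :
    (orthogonalStabilizer (inlVec e '' S) ⊓ orthogonalStabilizer (inrVec e '' T)).comap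
        (blockDiagonalHom R e) =
      (orthogonalStabilizer S).prod (orthogonalStabilizer T) := by
  ext A
  simp only [Subgroup.mem_comap, Subgroup.mem_inf, Subgroup.mem_prod, mem_orthogonalStabilizer,
    Set.image_image, blockDiagonalHom_mulVec_inlVec, blockDiagonalHom_mulVec_inrVec]
  rw [← Set.image_image (inlVec e), ← Set.image_image (inrVec e),
    (inlVec_injective e).image_injective.eq_iff, (inrVec_injective e).image_injective.eq_iff]

theorem orthogonalStabilizer_inlVec_image_le_range (e : ι ⊕ κ ≃ μ) {S : Set (ι → R)}
    (hS : Submodule.span R S = ⊤) :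
    orthogonalStabilizer (inlVec e '' S) ≤ (blockDiagonalHom R e).range := by
  intro M hM
  have hblocks := fromBlocks_toBlocks (M.1.submatrix e e)
  have h₂₁ : (M.1.submatrix e e).toBlocks₂₁ = 0 := by
    refine eq_zero_of_mulVec_eq_zero_of_span_eq_top hS fun x hx => ?_
    obtain ⟨y, -, hy⟩ := hM.subset ⟨_, ⟨x, hx, rfl⟩, rfl⟩
    have hxy : M.1.submatrix e e *ᵥ Sum.elim x 0 = Sum.elim y 0 := by
      rw [submatrix_mulVec_equiv]
      exact (congrArg (· ∘ e) hy).symm.trans (by simp [inlVec, Function.comp_assoc])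
    rw [← hblocks, fromBlocks_mulVec] at hxy
    simpa using congrArg (· ∘ Sum.inr) hxy
  rw [h₂₁] at hblocks
  obtain ⟨hA, hB, hD⟩ := blocks_of_fromBlocks_zero₂₁_mem_orthogonalGroup
    (hblocks.symm ▸ submatrix_equiv_mem_orthogonalGroup e M.2)
  rw [hB] at hblocks
  refine ⟨(⟨_, hA⟩, ⟨_, hD⟩), Subtype.ext ?_⟩
  rw [coe_blockDiagonalHom, hblocks, submatrix_submatrix, e.self_comp_symm, submatrix_id_id]

theorem map_blockDiagonalHom_orthogonalStabilizer_prod (e : ι ⊕ κ ≃ μ) {S : Set (ι → R)}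
    (T : Set (κ → R)) (hS : Submodule.span R S = ⊤) :
    ((orthogonalStabilizer S).prod (orthogonalStabilizer T)).map (blockDiagonalHom R e) =
      orthogonalStabilizer (inlVec e '' S) ⊓ orthogonalStabilizer (inrVec e '' T) := by
  rw [← comap_blockDiagonalHom_orthogonalStabilizer e,
    Subgroup.map_comap_eq_self
      (inf_le_left.trans (orthogonalStabilizer_inlVec_image_le_range e hS))]

end SetStabilizer

section Plane

/-- The point of the unit circle in `ℝ²` corresponding to a complex number of modulus one. -/
def circleVec (z : Circle) : Fin 2 → ℝ := ![(z : ℂ).re, (z : ℂ).im]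

theorem circleVec_injective : Function.Injective circleVec := fun _ _ h =>
  Circle.ext (Complex.ext (congrFun h 0) (congrFun h 1))

theorem circleVec_exp (θ : ℝ) : circleVec (Circle.exp θ) = ![cos θ, sin θ] := by
  simp [circleVec, Complex.exp_ofReal_mul_I_re, Complex.exp_ofReal_mul_I_im]

theorem re_mul_re_add_im_mul_im (z : Circle) :
    (z : ℂ).re * (z : ℂ).re + (z : ℂ).im * (z : ℂ).im = 1 :=
  Circle.normSq_coe z

/-- The rotation of the plane `ℂ = ℝ²` given by multiplication by `z`. -/
def rotation (z : Circle) : orthogonalGroup (Fin 2) ℝ :=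
  ⟨!![(z : ℂ).re, -(z : ℂ).im; (z : ℂ).im, (z : ℂ).re], by
    rw [mem_orthogonalGroup_iff]
    ext i j
    fin_cases i <;> fin_cases j <;> simp [Matrix.mul_apply] <;>
      linarith [re_mul_re_add_im_mul_im z]⟩

/-- The reflection `w ↦ z * conj w` of the plane `ℂ = ℝ²`. -/
def reflection (z : Circle) : orthogonalGroup (Fin 2) ℝ :=
  ⟨!![(z : ℂ).re, (z : ℂ).im; (z : ℂ).im, -(z : ℂ).re], by
    rw [mem_orthogonalGroup_iff]
    ext i j
    fin_cases i <;> fin_cases j <;> simp [Matrix.mul_apply] <;>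
      linarith [re_mul_re_add_im_mul_im z]⟩

theorem rotation_mulVec (z w : Circle) : (rotation z).1 *ᵥ circleVec w = circleVec (z * w) := by
  ext i
  fin_cases i <;> simp [rotation, circleVec, Matrix.mulVec, dotProduct] <;> ring

theorem reflection_mulVec (z w : Circle) :
    (reflection z).1 *ᵥ circleVec w = circleVec (z * w⁻¹) := by
  ext i
  fin_cases i <;>
    simp [reflection, circleVec, Matrix.mulVec, dotProduct, Circle.coe_inv_eq_conj,
      -Circle.coe_inv, add_comm]

theorem rotation_one : rotation 1 = 1 := by
  ext i j
  fin_cases i <;> fin_cases j <;> simp [rotation]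

theorem rotation_mul_rotation (z w : Circle) : rotation z * rotation w = rotation (z * w) := by
  ext i j
  fin_cases i <;> fin_cases j <;> simp [rotation] <;> ring

theorem rotation_mul_reflection (z w : Circle) :
    rotation z * reflection w = reflection (z * w) := by
  ext i j
  fin_cases i <;> fin_cases j <;> simp [rotation, reflection] <;> ring

theorem reflection_mul_rotation (z w : Circle) :
    reflection z * rotation w = reflection (z * w⁻¹) := by
  ext i j
  fin_cases i <;> fin_cases j <;>
    simp [rotation, reflection, Circle.coe_inv_eq_conj, -Circle.coe_inv, add_comm]

theorem reflection_mul_reflection (z w : Circle) :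
    reflection z * reflection w = rotation (z * w⁻¹) := by
  ext i j
  fin_cases i <;> fin_cases j <;>
    simp [rotation, reflection, Circle.coe_inv_eq_conj, -Circle.coe_inv] <;> ring

theorem det_rotation (z : Circle) : (rotation z).1.det = 1 := by
  simp [rotation, det_fin_two, re_mul_re_add_im_mul_im]

theorem det_reflection (z : Circle) : (reflection z).1.det = -1 := by
  rw [reflection, det_fin_two_of, mul_neg, ← neg_add', re_mul_re_add_im_mul_im]

theorem rotation_ne_reflection (z w : Circle) : rotation z ≠ reflection w := fun h => by
  have hdet := congrArg (fun A => A.1.det) h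
  norm_num [det_rotation, det_reflection] at hdet

theorem rotation_injective : Function.Injective rotation := fun z w h => by
  have hone : circleVec (z * 1) = circleVec (w * 1) := by rw [← rotation_mulVec, h, rotation_mulVec]
  exact mul_right_cancel (circleVec_injective hone)

theorem reflection_injective : Function.Injective reflection := fun z w h => by
  have hone : circleVec (z * 1⁻¹) = circleVec (w * 1⁻¹) := by
    rw [← reflection_mulVec, h, reflection_mulVec]
  exact mul_right_cancel (circleVec_injective hone)

theorem exists_eq_rotation_of_det_eq_one {A : orthogonalGroup (Fin 2) ℝ} (hA : A.1.det = 1) :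
    ∃ z, A = rotation z := by
  obtain ⟨hdiag, hanti, hnorm⟩ := mem_specialOrthogonalGroup_fin_two_iff.mp ⟨A.2, hA⟩
  have hz : ‖(⟨A.1 0 0, A.1 1 0⟩ : ℂ)‖ = 1 := by
    rw [Complex.norm_def, Real.sqrt_eq_one, Complex.normSq_mk, ← hnorm, hanti]
    ring
  refine ⟨⟨⟨A.1 0 0, A.1 1 0⟩, mem_sphere_zero_iff_norm.mpr hz⟩, ?_⟩
  ext i j
  fin_cases i <;> fin_cases j <;> simp [rotation, hdiag, hanti]

theorem exists_eq_rotation_or_reflection (A : orthogonalGroup (Fin 2) ℝ) :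
    ∃ z, A = rotation z ∨ A = reflection z := by
  have hdet : A.1.det * A.1.det = 1 := (Unitary.mem_iff.mp (det_of_mem_unitary A.2)).1
  rcases mul_self_eq_one_iff.mp hdet with h | h
  · obtain ⟨z, hz⟩ := exists_eq_rotation_of_det_eq_one h
    exact ⟨z, Or.inl hz⟩
  · obtain ⟨z, hz⟩ := exists_eq_rotation_of_det_eq_one (A := A * reflection 1)
      (by simp [h, det_reflection])
    refine ⟨z, Or.inr ?_⟩
    calc A = A * reflection 1 * reflection 1 := by
          simp [mul_assoc, reflection_mul_reflection, rotation_one]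
      _ = reflection z := by rw [hz, rotation_mul_reflection, mul_one]

theorem span_circleVec_pair {z w : Circle} (h : (z : ℂ).re * (w : ℂ).im ≠ (z : ℂ).im * (w : ℂ).re) :
    Submodule.span ℝ {circleVec z, circleVec w} = ⊤ := by
  have hli : LinearIndependent ℝ ![circleVec z, circleVec w] :=
    linearIndependent_rows_of_det_ne_zero (A := !![(z : ℂ).re, (z : ℂ).im; (w : ℂ).re, (w : ℂ).im])
      (by rw [det_fin_two_of]; exact sub_ne_zero.mpr h)
  simpa [Set.pair_comm] using hli.span_eq_top_of_card_eq_finrank (by simp)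

end Plane

section RegularPolygon

variable (n : ℕ) [NeZero n]

/-- The vertices of the regular `n`-gon inscribed in the unit circle of `ℝ²` having `z` as a
vertex. -/
def regularPolygon (z : Circle) : Set (Fin 2 → ℝ) :=
  Set.range fun k : ZMod n => circleVec (ZMod.toCircle k * z)

/-- The action of `D_n` on the plane by symmetries of the regular `n`-gon through `z`. The
reflection `sr 0` is the one fixing `z`, namely `w ↦ z ^ 2 * conj w`. -/
noncomputable def dihedralHom (z : Circle) : DihedralGroup n →* orthogonalGroup (Fin 2) ℝ where
  toFun
    | .r i => rotation (ZMod.toCircle i)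
    | .sr i => reflection (z ^ 2 * ZMod.toCircle (-i))
  map_one' := by
    change rotation (ZMod.toCircle 0) = 1
    rw [AddChar.map_zero_eq_one, rotation_one]
  map_mul' := by
    rintro (i | i) (j | j)
    · change rotation (ZMod.toCircle (i + j)) = _
      rw [rotation_mul_rotation, AddChar.map_add_eq_mul]
    · change reflection (z ^ 2 * ZMod.toCircle (-(j - i))) = _
      rw [rotation_mul_reflection, neg_sub, sub_eq_add_neg, AddChar.map_add_eq_mul, mul_left_comm]
    · change reflection (z ^ 2 * ZMod.toCircle (-(i + j))) = _
      rw [reflection_mul_rotation, neg_add, AddChar.map_add_eq_mul, AddChar.map_neg_eq_inv _ j,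
        mul_assoc]
    · change rotation (ZMod.toCircle (j - i)) = _
      rw [reflection_mul_reflection, ← div_eq_mul_inv, mul_div_mul_left_eq_div,
        ← AddChar.map_sub_eq_div, neg_sub_neg]

variable {n}

theorem dihedralHom_r (z : Circle) (i : ZMod n) :
    dihedralHom n z (.r i) = rotation (ZMod.toCircle i) :=
  rfl

theorem dihedralHom_sr (z : Circle) (i : ZMod n) :
    dihedralHom n z (.sr i) = reflection (z ^ 2 * ZMod.toCircle (-i)) :=
  rfl

theorem dihedralHom_injective (z : Circle) : Function.Injective (dihedralHom n z) := by
  rintro (i | i) (j | j) h <;> simp only [dihedralHom_r, dihedralHom_sr] at h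
  · rw [ZMod.injective_toCircle (rotation_injective h)]
  · exact absurd h (rotation_ne_reflection _ _)
  · exact absurd h.symm (rotation_ne_reflection _ _)
  · rw [neg_injective (ZMod.injective_toCircle (mul_left_cancel (reflection_injective h)))]

theorem dihedralHom_mem_orthogonalStabilizer (z : Circle) (g : DihedralGroup n) :
    dihedralHom n z g ∈ orthogonalStabilizer (regularPolygon n z) := by
  rw [mem_orthogonalStabilizer, regularPolygon, ← Set.range_comp]
  rcases g with i | i
  · refine Eq.trans (congrArg Set.range (funext fun k => ?_))
      ((Equiv.addLeft i).surjective.range_comp fun k => circleVec (ZMod.toCircle k * z))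
    calc (rotation (ZMod.toCircle i)).1 *ᵥ circleVec (ZMod.toCircle k * z)
        = circleVec (ZMod.toCircle i * (ZMod.toCircle k * z)) := rotation_mulVec _ _
      _ = circleVec (ZMod.toCircle (i + k) * z) := by rw [AddChar.map_add_eq_mul, mul_assoc]
  · refine Eq.trans (congrArg Set.range (funext fun k => ?_))
      ((Equiv.subLeft (-i)).surjective.range_comp fun k => circleVec (ZMod.toCircle k * z))
    calc (reflection (z ^ 2 * ZMod.toCircle (-i))).1 *ᵥ circleVec (ZMod.toCircle k * z)
        = circleVec (z ^ 2 * ZMod.toCircle (-i) * (ZMod.toCircle k * z)⁻¹) :=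
          reflection_mulVec _ _
      _ = circleVec (ZMod.toCircle (-i - k) * z) := by
          rw [AddChar.map_sub_eq_div, ← div_eq_mul_inv, sq, mul_assoc, mul_comm (ZMod.toCircle k) z,
            mul_div_mul_left_eq_div, mul_comm z, mul_div_right_comm]

theorem range_dihedralHom (z : Circle) :
    (dihedralHom n z).range = orthogonalStabilizer (regularPolygon n z) := by
  refine le_antisymm ?_ fun A hA => ?_
  · rintro _ ⟨g, rfl⟩
    exact dihedralHom_mem_orthogonalStabilizer z g
  have hz : circleVec z ∈ regularPolygon n z := ⟨0, by simp⟩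
  obtain ⟨k, hk⟩ := hA.subset ⟨_, hz, rfl⟩
  obtain ⟨w, rfl | rfl⟩ := exists_eq_rotation_or_reflection A
  · have hw : ZMod.toCircle k = w :=
      mul_right_cancel (circleVec_injective (hk.trans (rotation_mulVec w z)))
    exact ⟨.r k, by rw [dihedralHom_r, hw]⟩
  · have hw : ZMod.toCircle k * z = w * z⁻¹ :=
      circleVec_injective (hk.trans (reflection_mulVec w z))
    refine ⟨.sr (-k), ?_⟩
    rw [dihedralHom_sr, neg_neg, sq, mul_assoc, mul_comm z (ZMod.toCircle k), hw]
    simp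

theorem im_toCircle_one_ne_zero (hn : 3 ≤ n) : (ZMod.toCircle (1 : ZMod n) : ℂ).im ≠ 0 := by
  intro him
  set ζ := ZMod.toCircle (1 : ZMod n) with hζ
  have hinv : ζ⁻¹ = ζ := Circle.ext (by
    rw [Circle.coe_inv_eq_conj, Complex.conj_eq_iff_im.mpr him])
  have htwo : ZMod.toCircle ((2 : ℕ) : ZMod n) = ZMod.toCircle (0 : ZMod n) := by
    rw [Nat.cast_two, ← one_add_one_eq_two, AddChar.map_add_eq_mul, AddChar.map_zero_eq_one, ← hζ]
    exact mul_eq_one_iff_inv_eq.mpr hinv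
  have hdvd := (ZMod.natCast_eq_zero_iff 2 n).mp (ZMod.injective_toCircle htwo)
  exact absurd (Nat.le_of_dvd two_pos hdvd) (by omega)

theorem span_regularPolygon_eq_top (hn : 3 ≤ n) (z : Circle) :
    Submodule.span ℝ (regularPolygon n z) = ⊤ := by
  set ζ := ZMod.toCircle (1 : ZMod n)
  have hindep :
      (z : ℂ).re * ((ζ * z : Circle) : ℂ).im ≠ (z : ℂ).im * ((ζ * z : Circle) : ℂ).re := by
    have hdet : (z : ℂ).re * ((ζ * z : Circle) : ℂ).im - (z : ℂ).im * ((ζ * z : Circle) : ℂ).re =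
        (ζ : ℂ).im := by
      rw [Circle.coe_mul, Complex.mul_re, Complex.mul_im]
      linear_combination (ζ : ℂ).im * re_mul_re_add_im_mul_im z
    exact sub_ne_zero.mp (hdet ▸ im_toCircle_one_ne_zero hn)
  refine top_le_iff.mp ((span_circleVec_pair hindep).ge.trans (Submodule.span_mono ?_))
  rintro _ (rfl | rfl)
  exacts [⟨0, by simp⟩, ⟨1, rfl⟩]

theorem regularPolygon_exp (θ : ℝ) :
    regularPolygon n (Circle.exp θ) =
      Set.range fun k : ZMod n =>
        ![cos (2 * π * (k.val / n) + θ), sin (2 * π * (k.val / n) + θ)] := by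
  simp only [regularPolygon, ZMod.toCircle_eq_circleExp, ← Circle.exp_add, circleVec_exp]

end RegularPolygon

theorem inlVec_finSumFinEquiv (a b : ℝ) :
    inlVec (finSumFinEquiv : Fin 2 ⊕ Fin 2 ≃ Fin 4) ![a, b] = ![a, b, 0, 0] := by
  ext i
  fin_cases i <;> rfl

theorem inrVec_finSumFinEquiv (a b : ℝ) :
    inrVec (finSumFinEquiv : Fin 2 ⊕ Fin 2 ≃ Fin 4) ![a, b] = ![0, 0, a, b] := by
  ext i
  fin_cases i <;> rfl

theorem twistorTriangle_eq :
    twistorTriangle =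
      inlVec (finSumFinEquiv : Fin 2 ⊕ Fin 2 ≃ Fin 4) ''
        regularPolygon 3 (Circle.exp (π / 3)) := by
  have h₀ : 2 * π * (((0 : ZMod 3).val : ℝ) / (3 : ℕ)) + π / 3 = π / 3 := by simp
  have h₁ : 2 * π * (((1 : ZMod 3).val : ℝ) / (3 : ℕ)) + π / 3 = π := by
    rw [show (1 : ZMod 3).val = 1 from rfl]; push_cast; ring
  have h₂ : 2 * π * (((2 : ZMod 3).val : ℝ) / (3 : ℕ)) + π / 3 = 2 * π - π / 3 := by
    rw [show (2 : ZMod 3).val = 2 from rfl]; push_cast; ring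
  have hrange (f : ZMod 3 → Fin 4 → ℝ) : Set.range f = {f 0, f 1, f 2} := by
    rw [← Set.image_univ, show (Set.univ : Set (ZMod 3)) = {0, 1, 2} by ext k; revert k; decide,
      Set.image_insert_eq, Set.image_pair]
  rw [regularPolygon_exp, ← Set.range_comp, hrange]
  simp only [Function.comp_apply, inlVec_finSumFinEquiv, h₀, h₁, h₂, cos_pi, sin_pi,
    cos_two_pi_sub, sin_two_pi_sub, twistorTriangle]

theorem tripleHexagon_eq :
    tripleHexagon =
      inrVec (finSumFinEquiv : Fin 2 ⊕ Fin 2 ≃ Fin 4) '' regularPolygon 6 1 := by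
  rw [← Circle.exp_zero, regularPolygon_exp, ← Set.range_comp]
  ext v
  refine exists_congr fun k : Fin 6 => ?_
  have hangle : 2 * π * (((k : ℕ) : ℝ) / (6 : ℕ)) + 0 = (k : ℕ) * π / 3 := by
    push_cast
    ring
  change _ ↔ inrVec finSumFinEquiv ![cos (2 * π * (((k : ℕ) : ℝ) / (6 : ℕ)) + 0),
    sin (2 * π * (((k : ℕ) : ℝ) / (6 : ℕ)) + 0)] = v
  rw [hangle, inrVec_finSumFinEquiv, eq_comm]

end PolygonSymmetry

open PolygonSymmetry

theorem symmetry_group_of_discriminant_locus_general {μ : Type*} [Fintype μ] [DecidableEq μ]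
    {n m : ℕ} [NeZero n] [NeZero m] (e : Fin 2 ⊕ Fin 2 ≃ μ) (hn : 3 ≤ n) (z w : Circle) :
    ∃ G : Subgroup (orthogonalGroup μ ℝ),
      (∀ A : orthogonalGroup μ ℝ,
        A ∈ G ↔
          ((fun v => (A : Matrix μ μ ℝ) *ᵥ v) '' (inlVec e '' regularPolygon n z) =
              inlVec e '' regularPolygon n z ∧
           (fun v => (A : Matrix μ μ ℝ) *ᵥ v) '' (inrVec e '' regularPolygon m w) =
              inrVec e '' regularPolygon m w)) ∧
      Nonempty (G ≃* DihedralGroup n × DihedralGroup m) ∧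
      Nat.card G = 2 * n * (2 * m) := by
  let φ := (blockDiagonalHom ℝ e).comp ((dihedralHom n z).prodMap (dihedralHom m w))
  have hφ : Function.Injective φ := (blockDiagonalHom_injective e).comp
    ((dihedralHom_injective z).prodMap (dihedralHom_injective w))
  have hrange : φ.range = orthogonalStabilizer (inlVec e '' regularPolygon n z) ⊓
      orthogonalStabilizer (inrVec e '' regularPolygon m w) := by
    rw [MonoidHom.range_comp, MonoidHom.range_prodMap, range_dihedralHom, range_dihedralHom,
      map_blockDiagonalHom_orthogonalStabilizer_prod e _ (span_regularPolygon_eq_top hn z)]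
  have equiv : φ.range ≃* DihedralGroup n × DihedralGroup m := (MonoidHom.ofInjective hφ).symm
  refine ⟨φ.range, fun A => by rw [hrange]; rfl, ⟨equiv⟩, ?_⟩
  rw [Nat.card_congr equiv.toEquiv, Nat.card_prod, DihedralGroup.nat_card, DihedralGroup.nat_card]

/-- The subgroup of `O(4, ℝ)` consisting of the orthogonal transformations preserving both
the triangle of twistor-line points and the hexagon of triple points is isomorphic to
`D₃ × D₆`; in particular it has order `72`. -/
theorem symmetry_group_of_discriminant_locus :
    ∃ G : Subgroup (Matrix.orthogonalGroup (Fin 4) ℝ),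
      (∀ A : Matrix.orthogonalGroup (Fin 4) ℝ,
        A ∈ G ↔
          ((fun v => (A : Matrix (Fin 4) (Fin 4) ℝ).mulVec v) '' twistorTriangle =
              twistorTriangle ∧
           (fun v => (A : Matrix (Fin 4) (Fin 4) ℝ).mulVec v) '' tripleHexagon =
              tripleHexagon)) ∧
      Nonempty (G ≃* DihedralGroup 3 × DihedralGroup 6) ∧
      Nat.card G = 72 := by
  rw [twistorTriangle_eq, tripleHexagon_eq]
  exact symmetry_group_of_discriminant_locus_general finSumFinEquiv le_rfl _ _
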